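/- arXiv:1110.3561 — 2 statements merged into one kernel-verified Lean document; each statement's English description precedes it below -/
import Mathlib

section
/- Let m be a positive integer, let τ > 0 and s ≥ 0, let A be a d × n real matrix with operator norm at most s, and let x, x̂ ∈ [0,1]ⁿ satisfy Ax = Ax̂ and ‖A([x]_m − [x̂]_m)‖₂ ≥ τ ‖[x]_m − [x̂]_m‖₂, where [·]_m is the coordinatewise m-bit truncation. Then ‖x − x̂‖₂ ≤ (s/τ + 1) · √(n · 2^{1−2m}). -/
/-- The Euclidean (`ℓ₂`) norm of a vector in `ℝᵏ`. -/
noncomputable def l2norm {k : ℕ} (v : Fin k → ℝ) : ℝ := Real.sqrt (∑ i, v i ^ 2)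

/-- The `m`-bit truncation of a real number: `[x]_m = 2⁻ᵐ ⌊2ᵐ x⌋`. -/
noncomputable def trunc (m : ℕ) (x : ℝ) : ℝ := (⌊(2 : ℝ) ^ m * x⌋ : ℝ) / 2 ^ m

/-!
Write `x - x̂ = p + e`, where `p = [x]_m - [x̂]_m` and `e` is the difference of the truncation
residuals. As `A (p + e) = 0`, the vectors `A p` and `A e` have the same norm, so
`τ ‖p‖ ≤ ‖A p‖ = ‖A e‖ ≤ s ‖e‖`, and hence `‖p + e‖ ≤ (s / τ + 1) ‖e‖`. The residuals of two reals
both lie in `[0, 2⁻ᵐ)`, so their difference is at most `2⁻ᵐ`, not `2 · 2⁻ᵐ`: this gives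
`‖e‖ ≤ √n 2⁻ᵐ`, better by a factor `√2` than what is needed.
-/

theorem l2norm_eq_norm_toLp {k : ℕ} (v : Fin k → ℝ) :
    l2norm v = ‖(WithLp.toLp 2 v : EuclideanSpace ℝ (Fin k))‖ := by
  simp only [l2norm, EuclideanSpace.norm_eq, Real.norm_eq_abs, sq_abs]

theorem sub_trunc_eq_fract_div (m : ℕ) (a : ℝ) : a - trunc m a = Int.fract (2 ^ m * a) / 2 ^ m := by
  rw [trunc, ← Int.self_sub_floor]
  field_simp

theorem abs_sub_trunc_sub_sub_trunc_le (m : ℕ) (a b : ℝ) :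
    |(a - trunc m a) - (b - trunc m b)| ≤ 1 / 2 ^ m := by
  rw [sub_trunc_eq_fract_div, sub_trunc_eq_fract_div, ← sub_div, abs_div,
    abs_of_pos (by positivity : (0 : ℝ) < 2 ^ m)]
  gcongr
  exact abs_sub_le_of_nonneg_of_le (Int.fract_nonneg _) (Int.fract_lt_one _).le
    (Int.fract_nonneg _) (Int.fract_lt_one _).le

theorem sqrt_div_two_pow_le (a : ℝ) (m : ℕ) :
    √a / 2 ^ m ≤ √(a * (2 : ℝ) ^ (1 - 2 * (m : ℤ))) := by
  have exponent_split : (2 : ℝ) ^ (1 - 2 * (m : ℤ)) = 2 * ((2 ^ m)⁻¹) ^ 2 := by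
    rw [zpow_sub₀ two_ne_zero, zpow_one, mul_comm (2 : ℤ), zpow_mul, zpow_natCast, div_eq_mul_inv,
      inv_pow]
    norm_cast
  calc √a / 2 ^ m = √a * √(((2 ^ m)⁻¹) ^ 2) := by
        rw [Real.sqrt_sq (by positivity), div_eq_mul_inv]
    _ ≤ √a * √(2 * ((2 ^ m)⁻¹) ^ 2) := by
        gcongr
        exact le_mul_of_one_le_left (sq_nonneg _) one_le_two
    _ = √(a * (2 : ℝ) ^ (1 - 2 * (m : ℤ))) := by
        rw [exponent_split, Real.sqrt_mul' a (by positivity)]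

theorem norm_le_sqrt_card_mul_of_forall_norm_le {ι : Type*} [Fintype ι] {β : ι → Type*}
    [∀ i, SeminormedAddCommGroup (β i)] (v : PiLp 2 β) {c : ℝ} (hc : 0 ≤ c)
    (hv : ∀ i, ‖v i‖ ≤ c) : ‖v‖ ≤ √(Fintype.card ι) * c := by
  calc ‖v‖ = √(∑ i, ‖v i‖ ^ 2) := PiLp.norm_eq_of_L2 v
    _ ≤ √(∑ _i : ι, c ^ 2) := by
        gcongr with i
        exact hv i
    _ = √(Fintype.card ι) * c := by
        rw [Finset.sum_const, Finset.card_univ, nsmul_eq_mul, Real.sqrt_mul (Nat.cast_nonneg _),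
          Real.sqrt_sq hc]

theorem norm_add_le_of_map_add_eq_zero {E F 𝓕 : Type*} [SeminormedAddCommGroup E]
    [SeminormedAddCommGroup F] [FunLike 𝓕 E F] [AddMonoidHomClass 𝓕 E F] (f : 𝓕) {τ s : ℝ}
    (hτ : 0 < τ) {p e : E} (hp : τ * ‖p‖ ≤ ‖f p‖) (he : ‖f e‖ ≤ s * ‖e‖) (hpe : f (p + e) = 0) :
    ‖p + e‖ ≤ (s / τ + 1) * ‖e‖ := by
  have image_norm_eq : ‖f p‖ = ‖f e‖ := by
    rw [eq_neg_of_add_eq_zero_left ((map_add f p e).symm.trans hpe), norm_neg]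
  have p_le : ‖p‖ ≤ s / τ * ‖e‖ := by
    rw [div_mul_eq_mul_div, le_div_iff₀' hτ]
    exact hp.trans (image_norm_eq.trans_le he)
  calc ‖p + e‖ ≤ ‖p‖ + ‖e‖ := norm_add_le p e
    _ ≤ s / τ * ‖e‖ + ‖e‖ := by gcongr
    _ = (s / τ + 1) * ‖e‖ := by ring

section EuclideanSpace

variable {ι : Type*}

/-- The coordinatewise `m`-bit truncation of a vector, with values in `EuclideanSpace` so that its
norm is the `ℓ₂` norm. -/
noncomputable def truncVec (m : ℕ) (v : EuclideanSpace ℝ ι) : EuclideanSpace ℝ ι :=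
  WithLp.toLp 2 fun i => trunc m (v i)

variable [Fintype ι]

theorem norm_sub_truncVec_sub_sub_truncVec_le (m : ℕ) (x y : EuclideanSpace ℝ ι) :
    ‖(x - truncVec m x) - (y - truncVec m y)‖ ≤ √(Fintype.card ι) / 2 ^ m := by
  rw [div_eq_mul_one_div]
  exact norm_le_sqrt_card_mul_of_forall_norm_le _ (by positivity)
    fun i => abs_sub_trunc_sub_sub_trunc_le m (x i) (y i)

theorem recovery_error_bound_general {F 𝓕 : Type*} [SeminormedAddCommGroup F]
    [FunLike 𝓕 (EuclideanSpace ℝ ι) F] [AddMonoidHomClass 𝓕 (EuclideanSpace ℝ ι) F] (f : 𝓕)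
    (m : ℕ) {τ s : ℝ} (hτ : 0 < τ) (hs : 0 ≤ s) (hf : ∀ v, ‖f v‖ ≤ s * ‖v‖)
    {x y : EuclideanSpace ℝ ι} (hxy : f x = f y)
    (hlow : τ * ‖truncVec m x - truncVec m y‖ ≤ ‖f (truncVec m x - truncVec m y)‖) :
    ‖x - y‖ ≤ (s / τ + 1) * (√(Fintype.card ι) / 2 ^ m) := by
  set p := truncVec m x - truncVec m y
  set e := (x - truncVec m x) - (y - truncVec m y)
  have decomposition : p + e = x - y := by simp only [p, e]; abel
  have kernel : f (p + e) = 0 := by rw [decomposition, map_sub, hxy, sub_self]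
  calc ‖x - y‖ = ‖p + e‖ := by rw [decomposition]
    _ ≤ (s / τ + 1) * ‖e‖ := norm_add_le_of_map_add_eq_zero f hτ hlow (hf e) kernel
    _ ≤ (s / τ + 1) * (√(Fintype.card ι) / 2 ^ m) := by
        gcongr
        exact norm_sub_truncVec_sub_sub_truncVec_le m x y

end EuclideanSpace

/-- Let `m` be a positive integer, `τ > 0`, `s ≥ 0`, and let `A` be a `d × n`
real matrix with operator norm at most `s` (i.e. `‖Av‖₂ ≤ s ‖v‖₂` for all `v`). If
`x, x̂ ∈ [0,1]ⁿ` satisfy `Ax = Ax̂` and `‖A([x]_m - [x̂]_m)‖₂ ≥ τ ‖[x]_m - [x̂]_m‖₂`, then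
`‖x - x̂‖₂ ≤ (s/τ + 1) √(n 2^(1-2m))`. -/
theorem recovery_error_bound
    (m : ℕ) (hm : 0 < m) (τ : ℝ) (hτ : 0 < τ) (s : ℝ) (hs : 0 ≤ s)
    (d n : ℕ) (A : Matrix (Fin d) (Fin n) ℝ)
    (hA : ∀ v : Fin n → ℝ, l2norm (A.mulVec v) ≤ s * l2norm v)
    (x xh : Fin n → ℝ)
    (hx : ∀ j, x j ∈ Set.Icc (0 : ℝ) 1) (hxh : ∀ j, xh j ∈ Set.Icc (0 : ℝ) 1)
    (heq : A.mulVec x = A.mulVec xh)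
    (hlow : τ * l2norm (fun j => trunc m (x j) - trunc m (xh j))
      ≤ l2norm (A.mulVec (fun j => trunc m (x j) - trunc m (xh j)))) :
    l2norm (fun j => x j - xh j)
      ≤ (s / τ + 1) * Real.sqrt (n * (2 : ℝ) ^ (1 - 2 * (m : ℤ))) := by
  simp only [l2norm_eq_norm_toLp] at hA hlow ⊢
  refine (recovery_error_bound_general (Matrix.toEuclideanLin A) m hτ hs (fun v => hA v)
    (x := WithLp.toLp 2 x) (y := WithLp.toLp 2 xh) (congrArg (WithLp.toLp 2) heq) hlow).trans ?_
  rw [Fintype.card_fin]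
  exact mul_le_mul_of_nonneg_left (sqrt_div_two_pow_le n m) (by positivity)
end

section
/- Let 0 < p < 1 and let x ∈ ℝⁿ satisfy ∑_{j=1}^n |x_j|^p ≤ 1. Then for every positive integer k there exists a vector x̃ ∈ ℝⁿ with at most k nonzero coordinates (obtained by keeping the k largest-magnitude coordinates of x and setting the rest to zero) such that ‖x − x̃‖₂ ≤ k^{1/2 − 1/p}. -/
open Finset

/-!
Let `s` index `k` largest magnitudes of `x`. Every `|x j| ^ p` with `j ∉ s` is at most the average
of `|x i| ^ p` over `s`, hence at most `1 / k`. Writing `|x j| ^ q = (|x j| ^ p) ^ (q / p - 1) *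
|x j| ^ p` and summing over `j ∉ s` yields `∑ j ∉ s, |x j| ^ q ≤ k ^ (1 - q / p)`; take `q = 2`.
-/

/-- `s` is a set of positions of `#s` largest values of `f`. Ties may be broken in any way, so `s`
need not be a superlevel set of `f`. -/
def IsTopSet {ι α : Type*} [LE α] (f : ι → α) (s : Finset ι) : Prop :=
  ∀ ⦃i⦄, i ∈ s → ∀ ⦃j⦄, j ∉ s → f j ≤ f i

theorem exists_isTopSet_card_eq {ι α : Type*} [Fintype ι] [LinearOrder α] (f : ι → α) {k : ℕ}
    (hk : k ≤ Fintype.card ι) : ∃ s : Finset ι, IsTopSet f s ∧ #s = k := by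
  classical
  induction k with
  | zero => exact ⟨∅, by simp [IsTopSet], card_empty⟩
  | succ k ih =>
    obtain ⟨s, hs, hcard⟩ := ih (Nat.le_of_succ_le hk)
    have hne : sᶜ.Nonempty := by
      rw [← card_pos, card_compl]
      omega
    obtain ⟨m, hm, hmax⟩ := exists_max_image sᶜ f hne
    refine ⟨insert m s, fun i hi j hj => ?_, by rw [card_insert_of_notMem (mem_compl.1 hm), hcard]⟩
    have hjs : j ∉ s := fun h => hj (mem_insert_of_mem h)
    rcases mem_insert.1 hi with rfl | his
    · exact hmax j (mem_compl.2 hjs)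
    · exact hs his hjs

namespace IsTopSet

variable {ι : Type*} {s : Finset ι} {a : ι → ℝ} {p q : ℝ}

theorem rpow (hs : IsTopSet a s) (ha : ∀ i, 0 ≤ a i) (hp : 0 ≤ p) :
    IsTopSet (fun i => a i ^ p) s :=
  fun _ hi j hj => Real.rpow_le_rpow (ha j) (hs hi hj) hp

theorem le_sum_div_card (hs : IsTopSet a s) (hne : s.Nonempty) {j : ι} (hj : j ∉ s) :
    a j ≤ (∑ i ∈ s, a i) / #s := by
  rw [le_div_iff₀' (by exact_mod_cast hne.card_pos), ← nsmul_eq_mul]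
  exact card_nsmul_le_sum s a _ fun _ hi => hs hi hj

variable [Fintype ι] [DecidableEq ι]

theorem sum_compl_rpow_le (hs : IsTopSet a s) (hne : s.Nonempty) (ha : ∀ i, 0 ≤ a i)
    (hq : 1 ≤ q) :
    ∑ j ∈ sᶜ, a j ^ q ≤ ((∑ i ∈ s, a i) / #s) ^ (q - 1) * ∑ j ∈ sᶜ, a j := by
  rw [mul_sum]
  refine sum_le_sum fun j hj => ?_
  calc a j ^ q = a j ^ (q - 1) * a j := by
        rw [← Real.rpow_add_one' (ha j) (by linarith), sub_add_cancel]
    _ ≤ ((∑ i ∈ s, a i) / #s) ^ (q - 1) * a j :=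
        mul_le_mul_of_nonneg_right
          (Real.rpow_le_rpow (ha j) (hs.le_sum_div_card hne (mem_compl.1 hj)) (by linarith)) (ha j)

theorem sum_compl_rpow_le_card_rpow (hs : IsTopSet a s) (hne : s.Nonempty) (ha : ∀ i, 0 ≤ a i)
    (hp : 0 < p) (hpq : p ≤ q) (hsum : ∑ i, a i ^ p ≤ 1) :
    ∑ j ∈ sᶜ, a j ^ q ≤ (#s : ℝ) ^ (1 - q / p) := by
  have hpow (i : ι) : 0 ≤ a i ^ p := Real.rpow_nonneg (ha i) p
  have hle_one (t : Finset ι) : ∑ i ∈ t, a i ^ p ≤ 1 :=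
    (sum_le_univ_sum_of_nonneg hpow).trans hsum
  have hexp : 1 ≤ q / p := (one_le_div hp).2 hpq
  calc ∑ j ∈ sᶜ, a j ^ q = ∑ j ∈ sᶜ, (a j ^ p) ^ (q / p) := by
        simp only [← Real.rpow_mul (ha _), mul_div_cancel₀ _ hp.ne']
    _ ≤ ((∑ i ∈ s, a i ^ p) / #s) ^ (q / p - 1) * ∑ j ∈ sᶜ, a j ^ p :=
        (hs.rpow ha hp.le).sum_compl_rpow_le hne hpow hexp
    _ ≤ (1 / #s : ℝ) ^ (q / p - 1) * 1 := by
        have hnonneg (t : Finset ι) : 0 ≤ ∑ i ∈ t, a i ^ p := sum_nonneg fun i _ => hpow i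
        gcongr
        · exact hnonneg sᶜ
        · exact div_nonneg (hnonneg s) (Nat.cast_nonneg _)
        · exact hle_one s
        · exact hle_one sᶜ
    _ = (#s : ℝ) ^ (1 - q / p) := by
        rw [mul_one, one_div, Real.inv_rpow (Nat.cast_nonneg _),
          ← Real.rpow_neg (Nat.cast_nonneg _), neg_sub]

end IsTopSet

theorem card_filter_indicator_ne_zero_le {ι M : Type*} [Fintype ι] [DecidableEq M] [Zero M]
    (s : Finset ι) (x : ι → M) : #{j | (s : Set ι).indicator x j ≠ 0} ≤ #s :=
  card_le_card fun _ hj => Set.mem_of_indicator_ne_zero (mem_filter.1 hj).2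

theorem l2norm_sub_indicator {n : ℕ} (x : Fin n → ℝ) (s : Finset (Fin n)) :
    l2norm (fun j => x j - (s : Set (Fin n)).indicator x j) = √(∑ j ∈ sᶜ, x j ^ 2) := by
  rw [l2norm, ← sum_add_sum_compl s]
  have hin : ∑ j ∈ s, (x j - (s : Set (Fin n)).indicator x j) ^ 2 = 0 :=
    sum_eq_zero fun j hj => by simp [hj]
  have hout : ∑ j ∈ sᶜ, (x j - (s : Set (Fin n)).indicator x j) ^ 2 = ∑ j ∈ sᶜ, x j ^ 2 :=
    sum_congr rfl fun j hj => by simp [mem_compl.1 hj]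
  rw [hin, hout, zero_add]

theorem IsTopSet.l2norm_sub_indicator_le {n : ℕ} {x : Fin n → ℝ} {s : Finset (Fin n)}
    (hs : IsTopSet (fun j => |x j|) s) (hne : s.Nonempty) {p : ℝ} (hp0 : 0 < p) (hp2 : p ≤ 2)
    (hx : ∑ j, |x j| ^ p ≤ 1) :
    l2norm (fun j => x j - (s : Set (Fin n)).indicator x j) ≤ (#s : ℝ) ^ ((1 : ℝ) / 2 - 1 / p) := by
  rw [l2norm_sub_indicator, Real.sqrt_le_left (by positivity)]
  calc ∑ j ∈ sᶜ, x j ^ 2 = ∑ j ∈ sᶜ, |x j| ^ (2 : ℝ) := by simp only [Real.rpow_two, sq_abs]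
    _ ≤ (#s : ℝ) ^ (1 - 2 / p) :=
        hs.sum_compl_rpow_le_card_rpow hne (fun j => abs_nonneg (x j)) hp0 hp2 hx
    _ = ((#s : ℝ) ^ ((1 : ℝ) / 2 - 1 / p)) ^ 2 := by
        rw [← Real.rpow_mul_natCast (Nat.cast_nonneg _)]
        congr 1
        push_cast
        ring

theorem lp_ball_sparse_approximation_general {n : ℕ} {p : ℝ} (hp0 : 0 < p) (hp2 : p ≤ 2)
    {x : Fin n → ℝ} (hx : ∑ j, |x j| ^ p ≤ 1) {k : ℕ} (hk : 0 < k) :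
    ∃ s : Finset (Fin n), IsTopSet (fun j => |x j|) s ∧ #s = min k n ∧
      l2norm (fun j => x j - (s : Set (Fin n)).indicator x j) ≤
        (k : ℝ) ^ ((1 : ℝ) / 2 - 1 / p) := by
  rcases le_total k n with hkn | hnk
  · obtain ⟨s, hs, rfl⟩ := exists_isTopSet_card_eq (fun j => |x j|)
      (hkn.trans_eq (Fintype.card_fin n).symm)
    exact ⟨s, hs, (min_eq_left hkn).symm, hs.l2norm_sub_indicator_le (card_pos.1 hk) hp0 hp2 hx⟩
  · refine ⟨univ, by simp [IsTopSet], by simp [hnk], ?_⟩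
    rw [l2norm_sub_indicator, compl_univ, sum_empty, Real.sqrt_zero]
    positivity

/-- If `0 < p < 1` and `x ∈ ℝⁿ` lies in the unit `ℓ_p` ball, i.e.
`∑ j, |x j| ^ p ≤ 1`, then for every positive integer `k` there is a `k`-sparse vector `x̃`
with `‖x - x̃‖₂ ≤ k ^ (1/2 - 1/p)`. -/
theorem lp_ball_sparse_approximation
    (n : ℕ) (p : ℝ) (hp0 : 0 < p) (hp1 : p < 1) (x : Fin n → ℝ)
    (hx : ∑ j, |x j| ^ p ≤ 1) (k : ℕ) (hk : 0 < k) :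
    ∃ xt : Fin n → ℝ,
      (univ.filter fun j => xt j ≠ 0).card ≤ k ∧
      l2norm (fun j => x j - xt j) ≤ (k : ℝ) ^ ((1 : ℝ) / 2 - 1 / p) := by
  obtain ⟨s, -, hcard, hs⟩ := lp_ball_sparse_approximation_general hp0 (by linarith) hx hk
  exact ⟨_, (card_filter_indicator_ne_zero_le s x).trans (hcard.trans_le (min_le_left k n)), hs⟩
end
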